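/- Let ρ : [0,T) × ℝ → (0,∞) be a smooth solution of the renormalized curvature flow PDE ∂_t ρ = ρ² ∂²_θ ρ + ρ²(ρ − 2h_t), 2π-periodic in θ and satisfying the closure conditions for every t (so in particular the evolving curves are strictly convex). Then the isoperimetric ratio t ↦ σ_t²/(4π λ_t) is non-increasing on [0,T). -/

import Mathlib

/-!
Write `r = 1 / ρ` for the radius of curvature and `p = ⟨C, ν⟩` for the support function measured
from the point `C 0` of the curve, so that `p'' + p = r`.  The flow reads
`∂ₜ r = -(f'' + f)` with `f = ρ - 2 h`.

* Since `σ = ∫ r`, periodicity gives `σ' = -∫ ρ + 4 π h` (`IsRCFSolution.integral_radiusVel`).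
* Since `λ = ½ ∫ p r` and the operator `r ↦ p` is symmetric against closed curves
  (`green_supportFn`), `λ' = ∫ p ∂ₜ r = -∫ f r = -2 π + 2 h σ` 
  (`IsRCFSolution.hasDerivAt_encArea`).

With `R = ∫ ρ`, the derivative of `σ² / λ` has the sign of
`-2 λ² σ R + 10 π σ² λ - 2 σ⁴`.  The Cauchy–Schwarz inequality `4 π² ≤ σ R` bounds this by
`-2 (σ² - 4 π λ) (σ² - π λ)`, which is nonpositive by the isoperimetric inequality
`4 π λ ≤ σ²`.  So this weaker lower bound for `R` takes the place of the Gage inequality.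
The isoperimetric inequality itself is Hurwitz's: `2 λ = ∫ (p² - p'²)` and `σ = ∫ p`, so
that it is the Wirtinger inequality for `p`, which follows from Parseval's identity.
-/

open Real Set Filter MeasureTheory Topology NNReal

/-- The perimeter of the strictly convex curve with curvature function `ρ`
in tangent-angle coordinates: `σ = ∫₀^{2π} dθ/ρ(θ)`. -/
noncomputable def perim (ρ : ℝ → ℝ) : ℝ := ∫ θ in (0:ℝ)..(2 * π), 1 / ρ θ

/-- The curve associated to a curvature function `ρ` in tangent-angle coordinates:
`C(θ) = (∫₀^θ cos β/ρ(β) dβ, ∫₀^θ sin β/ρ(β) dβ)`. -/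
noncomputable def curveP (ρ : ℝ → ℝ) (θ : ℝ) : ℝ × ℝ :=
  (∫ β in (0:ℝ)..θ, Real.cos β / ρ β, ∫ β in (0:ℝ)..θ, Real.sin β / ρ β)

/-- The enclosed area `λ = ½ ∫₀^{2π} ⟨C(θ), ν(θ)⟩/ρ(θ) dθ`, with outward normal
`ν(θ) = (sin θ, −cos θ)`. -/
noncomputable def encArea (ρ : ℝ → ℝ) : ℝ :=
  (1 / 2) * ∫ θ in (0:ℝ)..(2 * π),
    ((curveP ρ θ).1 * Real.sin θ - (curveP ρ θ).2 * Real.cos θ) / ρ θ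

/-- The ratio `h = σ/λ`. -/
noncomputable def hRatio (ρ : ℝ → ℝ) : ℝ := perim ρ / encArea ρ

/-- `ρ : [0,T) × ℝ → (0,∞)` is a smooth solution of the renormalized curvature flow PDE
`∂_t ρ = ρ² ∂²_θ ρ + ρ²(ρ − 2 h_t)`, `2π`-periodic in `θ` and satisfying the closure
conditions for every `t`. -/
def IsRCFSolution (T : ℝ) (ρ : ℝ → ℝ → ℝ) : Prop :=
  ContDiffOn ℝ (⊤ : ℕ∞) (Function.uncurry ρ) (Ico 0 T ×ˢ (univ : Set ℝ)) ∧
  (∀ t ∈ Ico (0:ℝ) T, ∀ θ : ℝ, 0 < ρ t θ) ∧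
  (∀ t ∈ Ico (0:ℝ) T, ∀ θ : ℝ, ρ t (θ + 2 * π) = ρ t θ) ∧
  (∀ t ∈ Ico (0:ℝ) T, (∫ θ in (0:ℝ)..(2 * π), Real.cos θ / ρ t θ) = 0) ∧
  (∀ t ∈ Ico (0:ℝ) T, (∫ θ in (0:ℝ)..(2 * π), Real.sin θ / ρ t θ) = 0) ∧
  (∀ t ∈ Ico (0:ℝ) T, ∀ θ : ℝ,
    HasDerivWithinAt (fun s => ρ s θ)
      ((ρ t θ) ^ 2 * iteratedDeriv 2 (ρ t) θ + (ρ t θ) ^ 2 * (ρ t θ - 2 * hRatio (ρ t)))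
      (Ico 0 T) t)

/-! ### Wirtinger's inequality -/

/-- Wirtinger's inequality on a period, without normalising the mean of `u` to zero: by Parseval,
the left side is `2 π ∑_{n ≠ 0} |cₙ|²` and the right side is `2 π ∑ n² |cₙ|²`. -/
lemma wirtinger {u u' : ℝ → ℝ} (hu : ∀ x, HasDerivAt u (u' x) x) (hu' : Continuous u')
    (hper : u (2 * π) = u 0) :
    (∫ x in (0:ℝ)..(2 * π), u x ^ 2) - (∫ x in (0:ℝ)..(2 * π), u x) ^ 2 / (2 * π)
      ≤ ∫ x in (0:ℝ)..(2 * π), u' x ^ 2 := by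
  have hab : (0:ℝ) < 2 * π := by positivity
  have huc : Continuous u := continuous_iff_continuousAt.2 fun x => (hu x).continuousAt
  have hmem : ∀ g : ℝ → ℝ, Continuous g →
      MemLp (fun x => (g x : ℂ)) 2 (volume.restrict (Ioc 0 (2 * π))) := by
    intro g hg
    have hgc : Continuous fun x => (g x : ℂ) := by fun_prop
    obtain ⟨C, hC⟩ := isCompact_Icc.exists_bound_of_continuousOn
      (s := Icc (0:ℝ) (2 * π)) hgc.continuousOn
    refine MemLp.of_bound hgc.aestronglyMeasurable C ?_
    exact (ae_restrict_mem measurableSet_Ioc).mono fun x hx => hC x ⟨hx.1.le, hx.2⟩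
  have h1 := hasSum_sq_fourierCoeffOn hab (hmem u huc)
  have h2 := hasSum_sq_fourierCoeffOn hab (hmem u' hu')
  have hcoef : ∀ n : ℤ, n ≠ 0 → ‖fourierCoeffOn hab (fun x => (u x : ℂ)) n‖ ≤
      ‖fourierCoeffOn hab (fun x => (u' x : ℂ)) n‖ := by
    intro n hn
    have hn1 : (1:ℝ) ≤ ‖(n:ℂ)‖ := by
      rw [Complex.norm_intCast]
      exact_mod_cast Int.one_le_abs hn
    rw [fourierCoeffOn_of_hasDerivAt hab hn (f' := fun x => (u' x : ℂ))
      (fun x _ => (hu x).ofReal_comp)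
      ((Complex.continuous_ofReal.comp hu').intervalIntegrable _ _)]
    simp only [hper, sub_self, mul_zero, zero_sub, norm_mul, norm_neg, norm_div, norm_one,
      Complex.norm_I, mul_one, sub_zero, Complex.ofReal_zero, Complex.ofReal_mul, Complex.norm_real,
      Complex.norm_ofNat, Complex.ofReal_ofNat, Real.norm_eq_abs, abs_of_pos Real.pi_pos]
    have hc := norm_nonneg (fourierCoeffOn hab (fun x => (u' x : ℂ)) n)
    rw [div_mul_eq_mul_div, one_mul, div_le_iff₀ (by positivity)]
    nlinarith [mul_nonneg (mul_nonneg hc hab.le) (sub_nonneg.2 hn1)]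
  have h0 : ‖fourierCoeffOn hab (fun x => (u x : ℂ)) 0‖ ^ 2 =
      ((2 * π)⁻¹ * ∫ x in (0:ℝ)..(2 * π), u x) ^ 2 := by
    rw [fourierCoeffOn_eq_integral]
    simp only [neg_zero, fourier_zero, one_smul, sub_zero, intervalIntegral.integral_ofReal]
    rw [norm_smul, mul_pow, Complex.norm_real, mul_pow]
    simp only [Real.norm_eq_abs, sq_abs]
    field_simp
  have h3 := h1.sub (hasSum_ite_eq (0:ℤ) (‖fourierCoeffOn hab (fun x => (u x : ℂ)) 0‖ ^ 2))
  have h4 := hasSum_le (fun n => ?_) h3 h2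
  · rw [h0] at h4
    simp only [sub_zero, smul_eq_mul, Complex.norm_real, Real.norm_eq_abs, sq_abs] at h4
    have h5 := mul_le_mul_of_nonneg_left h4 hab.le
    rw [mul_sub, mul_inv_cancel_left₀ hab.ne', mul_inv_cancel_left₀ hab.ne'] at h5
    have h6 : 2 * π * ((2 * π)⁻¹ * ∫ x in (0:ℝ)..(2 * π), u x) ^ 2
        = (∫ x in (0:ℝ)..(2 * π), u x) ^ 2 / (2 * π) := by
      field_simp
    rwa [h6] at h5
  · split_ifs with hn
    · subst hn
      simp
    · simpa using pow_le_pow_left₀ (norm_nonneg _) (hcoef n hn) 2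

/-! ### The support function -/

/-- The support function `⟨C, ν⟩`, with origin at `C 0`, of the curve whose radius of curvature
in tangent-angle coordinates is `r`.  It makes sense for any `r`, in particular for variations
of a radius of curvature, and depends linearly on it. -/
noncomputable def supportFn (r : ℝ → ℝ) (θ : ℝ) : ℝ :=
  (∫ β in (0:ℝ)..θ, Real.cos β * r β) * Real.sin θ
    - (∫ β in (0:ℝ)..θ, Real.sin β * r β) * Real.cos θ

/-- The tangential component `⟨C, C'⟩ / r` of the position vector, which is the derivative of
`supportFn r`. -/
noncomputable def supportFnDeriv (r : ℝ → ℝ) (θ : ℝ) : ℝ :=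
  (∫ β in (0:ℝ)..θ, Real.cos β * r β) * Real.cos θ
    + (∫ β in (0:ℝ)..θ, Real.sin β * r β) * Real.sin θ

lemma hasDerivAt_primitive {g : ℝ → ℝ} (hg : Continuous g) (θ : ℝ) :
    HasDerivAt (fun x => ∫ β in (0:ℝ)..x, g β) (g θ) θ :=
  intervalIntegral.integral_hasDerivAt_right (hg.intervalIntegrable _ _)
    hg.stronglyMeasurable.stronglyMeasurableAtFilter hg.continuousAt

lemma hasDerivAt_supportFn {r : ℝ → ℝ} (hr : Continuous r) (θ : ℝ) :
    HasDerivAt (supportFn r) (supportFnDeriv r θ) θ := by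
  have hA := hasDerivAt_primitive (g := fun β => Real.cos β * r β) (by fun_prop) θ
  have hB := hasDerivAt_primitive (g := fun β => Real.sin β * r β) (by fun_prop) θ
  refine ((hA.mul (Real.hasDerivAt_sin θ)).sub (hB.mul (Real.hasDerivAt_cos θ))).congr_deriv ?_
  simp only [supportFnDeriv]
  ring

lemma hasDerivAt_supportFnDeriv {r : ℝ → ℝ} (hr : Continuous r) (θ : ℝ) :
    HasDerivAt (supportFnDeriv r) (r θ - supportFn r θ) θ := by
  have hA := hasDerivAt_primitive (g := fun β => Real.cos β * r β) (by fun_prop) θ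
  have hB := hasDerivAt_primitive (g := fun β => Real.sin β * r β) (by fun_prop) θ
  refine ((hA.mul (Real.hasDerivAt_cos θ)).add (hB.mul (Real.hasDerivAt_sin θ))).congr_deriv ?_
  simp only [supportFn]
  linear_combination r θ * Real.sin_sq_add_cos_sq θ

lemma continuous_supportFn {r : ℝ → ℝ} (hr : Continuous r) : Continuous (supportFn r) :=
  continuous_iff_continuousAt.2 fun θ => (hasDerivAt_supportFn hr θ).continuousAt

lemma continuous_supportFnDeriv {r : ℝ → ℝ} (hr : Continuous r) : Continuous (supportFnDeriv r) :=
  continuous_iff_continuousAt.2 fun θ => (hasDerivAt_supportFnDeriv hr θ).continuousAt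

/-- `r` is the radius of curvature of a closed curve. -/
structure ClosedRadius (r : ℝ → ℝ) : Prop where
  cont : Continuous r
  cos_eq : ∫ θ in (0:ℝ)..(2 * π), Real.cos θ * r θ = 0
  sin_eq : ∫ θ in (0:ℝ)..(2 * π), Real.sin θ * r θ = 0

/-- Green's identity for the operator `f ↦ f'' + f`.  No periodicity of `f` is needed, because
for a closed curve `p` and `p'` vanish at both ends of the interval. -/
lemma green_supportFn {r f f' f'' : ℝ → ℝ} (hr : ClosedRadius r)
    (hf : ∀ x, HasDerivAt f (f' x) x) (hf' : ∀ x, HasDerivAt f' (f'' x) x)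
    (hf'' : Continuous f'') :
    ∫ θ in (0:ℝ)..(2 * π), (f'' θ + f θ) * supportFn r θ
      = ∫ θ in (0:ℝ)..(2 * π), f θ * r θ := by
  have hfc : Continuous f := continuous_iff_continuousAt.2 fun x => (hf x).continuousAt
  have hrc := hr.cont
  have hp := continuous_supportFn hrc
  have hd : ∀ x, HasDerivAt (fun x => f' x * supportFn r x - f x * supportFnDeriv r x)
      ((f'' x + f x) * supportFn r x - f x * r x) x := by
    intro x
    refine (((hf' x).mul (hasDerivAt_supportFn hrc x)).sub
      ((hf x).mul (hasDerivAt_supportFnDeriv hrc x))).congr_deriv ?_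
    ring
  have h := intervalIntegral.integral_eq_sub_of_hasDerivAt (a := 0) (b := 2 * π)
    (fun x _ => hd x) ((by fun_prop : Continuous _).intervalIntegrable _ _)
  rw [intervalIntegral.integral_sub ((by fun_prop : Continuous _).intervalIntegrable _ _)
    ((by fun_prop : Continuous _).intervalIntegrable _ _)] at h
  simp only [supportFn, supportFnDeriv, hr.cos_eq, hr.sin_eq, intervalIntegral.integral_same] at h ⊢
  linarith

lemma integral_supportFn {r : ℝ → ℝ} (hr : ClosedRadius r) :
    ∫ θ in (0:ℝ)..(2 * π), supportFn r θ = ∫ θ in (0:ℝ)..(2 * π), r θ := by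
  simpa using green_supportFn hr (f := fun _ => 1) (f' := fun _ => 0) (f'' := fun _ => 0)
    (fun x => hasDerivAt_const x 1) (fun x => hasDerivAt_const x 0) continuous_const

/-- The isoperimetric inequality `4 π λ ≤ σ²`, with `2 λ = ∫ p r`. -/
lemma isoperimetric {r : ℝ → ℝ} (hr : ClosedRadius r) :
    2 * π * (∫ θ in (0:ℝ)..(2 * π), supportFn r θ * r θ) ≤ (∫ θ in (0:ℝ)..(2 * π), r θ) ^ 2 := by
  have hrc := hr.cont
  have hp := continuous_supportFn hrc
  have hq := continuous_supportFnDeriv hrc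
  have hw := wirtinger (hasDerivAt_supportFn hrc) hq
    (by simp [supportFn, hr.cos_eq, hr.sin_eq])
  rw [integral_supportFn hr] at hw
  have hd : ∀ x, HasDerivAt (fun x => supportFn r x * supportFnDeriv r x)
      (supportFn r x * r x - (supportFn r x ^ 2 - supportFnDeriv r x ^ 2)) x := by
    intro x
    refine ((hasDerivAt_supportFn hrc x).mul (hasDerivAt_supportFnDeriv hrc x)).congr_deriv ?_
    ring
  have h := intervalIntegral.integral_eq_sub_of_hasDerivAt (a := 0) (b := 2 * π)
    (fun x _ => hd x) ((by fun_prop : Continuous _).intervalIntegrable _ _)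
  rw [intervalIntegral.integral_sub ((by fun_prop : Continuous _).intervalIntegrable _ _)
      ((by fun_prop : Continuous _).intervalIntegrable _ _),
    intervalIntegral.integral_sub ((by fun_prop : Continuous _).intervalIntegrable _ _)
      ((by fun_prop : Continuous _).intervalIntegrable _ _)] at h
  have h0 : supportFn r (2 * π) = 0 := by simp [supportFn, hr.sin_eq]
  have h1 : supportFn r 0 = 0 := by simp [supportFn]
  rw [h0, h1] at h
  have hpi : (0:ℝ) < 2 * π := by positivity
  have h2 : (∫ θ in (0:ℝ)..(2 * π), supportFn r θ * r θ)
      ≤ (∫ θ in (0:ℝ)..(2 * π), r θ) ^ 2 / (2 * π) := by linarith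
  rw [le_div_iff₀ hpi] at h2
  linarith

lemma supportFn_eq_integral_sub {r : ℝ → ℝ} (hr : Continuous r) (θ : ℝ) :
    supportFn r θ = ∫ β in (0:ℝ)..θ, Real.sin (θ - β) * r β := by
  simp only [supportFn]
  rw [← intervalIntegral.integral_mul_const, ← intervalIntegral.integral_mul_const,
    ← intervalIntegral.integral_sub ((by fun_prop : Continuous _).intervalIntegrable _ _)
      ((by fun_prop : Continuous _).intervalIntegrable _ _)]
  congr 1 with β
  rw [Real.sin_sub]
  ring

/-- The base point of a closed convex curve lies on the inner side of every other tangent line.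
For `θ ≤ π` the kernel `sin (θ - β)` is positive on `(0, θ)`; for `θ ≥ π` closedness allows
integrating over `(θ, 2π)` instead. -/
lemma supportFn_pos {r : ℝ → ℝ} (hr : ClosedRadius r) (hpos : ∀ x, 0 < r x) {θ : ℝ}
    (hθ : θ ∈ Ioo 0 (2 * π)) : 0 < supportFn r θ := by
  have hrc := hr.cont
  have hc : Continuous fun β => Real.sin (θ - β) * r β := by fun_prop
  rcases le_total θ π with h | h
  · rw [supportFn_eq_integral_sub hrc]
    refine intervalIntegral.intervalIntegral_pos_of_pos_on (hc.intervalIntegrable _ _)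
      (fun β hβ => mul_pos ?_ (hpos β)) hθ.1
    exact Real.sin_pos_of_pos_of_lt_pi (by linarith [hβ.2]) (by linarith [hβ.1])
  · have htot : ∫ β in (0:ℝ)..(2 * π), Real.sin (θ - β) * r β = 0 := by
      have : ∀ β, Real.sin (θ - β) * r β
          = Real.sin θ * (Real.cos β * r β) - Real.cos θ * (Real.sin β * r β) := by
        intro β
        rw [Real.sin_sub]
        ring
      simp only [this]
      rw [intervalIntegral.integral_sub ((by fun_prop : Continuous _).intervalIntegrable _ _)
        ((by fun_prop : Continuous _).intervalIntegrable _ _),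
        intervalIntegral.integral_const_mul, intervalIntegral.integral_const_mul,
        hr.cos_eq, hr.sin_eq]
      simp
    have hadd := intervalIntegral.integral_add_adjacent_intervals
      (hc.intervalIntegrable (μ := volume) 0 θ) (hc.intervalIntegrable θ (2 * π))
    have hlast : 0 < ∫ β in θ..(2 * π), -(Real.sin (θ - β) * r β) := by
      refine intervalIntegral.intervalIntegral_pos_of_pos_on (hc.neg.intervalIntegrable _ _)
        (fun β hβ => ?_) hθ.2
      have : 0 < Real.sin (β - θ) :=
        Real.sin_pos_of_pos_of_lt_pi (by linarith [hβ.1]) (by linarith [hβ.2])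
      rw [← neg_mul, ← Real.sin_neg, neg_sub]
      exact mul_pos this (hpos β)
    rw [intervalIntegral.integral_neg] at hlast
    rw [supportFn_eq_integral_sub hrc]
    linarith

/-! ### Perimeter and area of a single curve -/

lemma encArea_eq (ρ : ℝ → ℝ) :
    encArea ρ = (1 / 2) * ∫ θ in (0:ℝ)..(2 * π),
      supportFn (fun θ => 1 / ρ θ) θ * (1 / ρ θ) := by
  simp only [encArea, curveP, supportFn, mul_one_div]

lemma encArea_pos {ρ : ℝ → ℝ} (hr : ClosedRadius fun θ => 1 / ρ θ) (hpos : ∀ x, 0 < ρ x) :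
    0 < encArea ρ := by
  rw [encArea_eq]
  have hrc := hr.cont
  have hp := continuous_supportFn hrc
  refine mul_pos (by norm_num) (intervalIntegral.intervalIntegral_pos_of_pos_on
    ((hp.mul hrc).intervalIntegrable _ _) (fun θ hθ => ?_) (by positivity))
  exact mul_pos (supportFn_pos hr (fun x => one_div_pos.2 (hpos x)) hθ) (one_div_pos.2 (hpos θ))

lemma perim_pos {ρ : ℝ → ℝ} (hr : Continuous fun θ => 1 / ρ θ) (hpos : ∀ x, 0 < ρ x) :
    0 < perim ρ :=
  intervalIntegral.intervalIntegral_pos_of_pos_on (hr.intervalIntegrable _ _)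
    (fun θ _ => one_div_pos.2 (hpos θ)) (by positivity)

lemma isoperimetric_encArea {ρ : ℝ → ℝ} (hr : ClosedRadius fun θ => 1 / ρ θ) :
    4 * π * encArea ρ ≤ perim ρ ^ 2 := by
  have h := isoperimetric hr
  rw [encArea_eq, perim]
  linarith

/-- The Cauchy–Schwarz inequality for `√ρ` and `1 / √ρ`. -/
lemma four_pi_sq_le {ρ : ℝ → ℝ} (hρ : Continuous ρ) (hpos : ∀ x, 0 < ρ x) :
    4 * π ^ 2 ≤ perim ρ * ∫ θ in (0:ℝ)..(2 * π), ρ θ := by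
  have hr : Continuous fun θ => 1 / ρ θ := continuous_const.div hρ fun x => (hpos x).ne'
  have hσ := perim_pos hr hpos
  set c := 2 * π / perim ρ with hc
  have hcr : Continuous fun θ => c ^ 2 * (1 / ρ θ) := continuous_const.mul hr
  have hperim : ∫ θ in (0:ℝ)..(2 * π), c ^ 2 * (1 / ρ θ) = c ^ 2 * perim ρ :=
    intervalIntegral.integral_const_mul _ _
  -- `c` makes the pointwise inequality `2 c ≤ ρ + c² / ρ` optimal after integration.
  have h := intervalIntegral.integral_mono_on (a := 0) (b := 2 * π) (μ := volume)
    (f := fun _ => 2 * c) (g := fun θ => ρ θ + c ^ 2 * (1 / ρ θ)) (by positivity)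
    (continuous_const.intervalIntegrable _ _)
    ((hρ.add hcr).intervalIntegrable _ _) (fun θ _ => by
      have := hpos θ
      have h2 : ρ θ + c ^ 2 * (1 / ρ θ) - 2 * c = (ρ θ - c) ^ 2 / ρ θ := by
        field_simp
        ring
      have h3 : 0 ≤ (ρ θ - c) ^ 2 / ρ θ := by positivity
      linarith)
  rw [intervalIntegral.integral_add (hρ.intervalIntegrable _ _)
    (hcr.intervalIntegrable _ _), hperim, intervalIntegral.integral_const, smul_eq_mul] at h
  have h2 := mul_le_mul_of_nonneg_left h hσ.le
  have h3 : perim ρ * c = 2 * π := by rw [hc]; field_simp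
  have h4 : perim ρ * ((2 * π - 0) * (2 * c)) = 8 * π ^ 2 := by
    linear_combination 4 * π * h3
  have h5 : perim ρ * (c ^ 2 * perim ρ) = 4 * π ^ 2 := by
    linear_combination (perim ρ * c + 2 * π) * h3
  rw [h4, mul_add, h5] at h2
  linarith

/-! ### Integrals depending on a parameter -/

section Parametric

variable {F F' : ℝ → ℝ → ℝ}

lemma continuousOn_parametric_primitive {S : Set ℝ}
    (hF : ContinuousOn (Function.uncurry F) (S ×ˢ univ)) :
    ContinuousOn (Function.uncurry fun t θ => ∫ β in (0:ℝ)..θ, F t β) (S ×ˢ univ) := by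
  have h1 : Continuous (Function.uncurry fun (t : S) β => F t β) :=
    hF.comp_continuous (f := fun q : S × ℝ => ((q.1 : ℝ), q.2)) (by fun_prop)
      fun q => ⟨q.1.2, mem_univ _⟩
  have h2 := intervalIntegral.continuous_parametric_primitive_of_continuous
    (μ := volume) (a₀ := 0) h1
  rw [continuousOn_iff_continuous_domRestrict]
  exact h2.comp (f := fun q : ↥(S ×ˢ (univ : Set ℝ)) => ((⟨q.1.1, q.2.1⟩ : S), q.1.2))
    (by fun_prop)

lemma continuousOn_parametric_integral {S : Set ℝ}
    (hF : ContinuousOn (Function.uncurry F) (S ×ˢ univ)) (b : ℝ) :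
    ContinuousOn (fun t => ∫ β in (0:ℝ)..b, F t β) S :=
  (continuousOn_parametric_primitive hF).comp (f := fun t => (t, b)) (by fun_prop)
    fun _ ht => ⟨ht, mem_univ _⟩

lemma continuous_slice {S : Set ℝ} (hF : ContinuousOn (Function.uncurry F) (S ×ˢ univ)) {t : ℝ}
    (ht : t ∈ S) : Continuous (F t) :=
  hF.comp_continuous (f := fun θ => (t, θ)) (by fun_prop) fun _ => ⟨ht, mem_univ _⟩

/-- Differentiation under the integral sign: `F'` is bounded on compact sets, which provides
the dominating constant. -/
lemma hasDerivAt_parametric_integral {S : Set ℝ} (hS : IsOpen S)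
    (hF : ContinuousOn (Function.uncurry F) (S ×ˢ univ))
    (hF' : ContinuousOn (Function.uncurry F') (S ×ˢ univ))
    (hd : ∀ t ∈ S, ∀ θ, HasDerivAt (fun s => F s θ) (F' t θ) t) (b : ℝ) {t : ℝ} (ht : t ∈ S) :
    HasDerivAt (fun s => ∫ θ in (0:ℝ)..b, F s θ) (∫ θ in (0:ℝ)..b, F' t θ) t := by
  obtain ⟨ε, hε, hεS⟩ := Metric.nhds_basis_closedBall.mem_iff.1 (hS.mem_nhds ht)
  obtain ⟨C, hC⟩ := ((isCompact_closedBall t ε).prod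
    (isCompact_uIcc (a := (0:ℝ)) (b := b))).exists_bound_of_continuousOn
    (hF'.mono (prod_mono hεS (subset_univ _)))
  refine (intervalIntegral.hasDerivAt_integral_of_dominated_loc_of_deriv_le (F := F) (F' := F')
    (bound := fun _ => C) (Metric.closedBall_mem_nhds t hε) ?_ ?_ ?_ ?_ ?_ ?_).2
  · filter_upwards [hS.mem_nhds ht] with s hs
    exact (continuous_slice hF hs).aestronglyMeasurable
  · exact (continuous_slice hF ht).intervalIntegrable _ _
  · exact (continuous_slice hF' ht).aestronglyMeasurable
  · exact Eventually.of_forall fun θ hθ s hs => hC (s, θ) ⟨hs, uIoc_subset_uIcc hθ⟩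
  · exact continuous_const.intervalIntegrable _ _
  · exact Eventually.of_forall fun θ _ s hs => hd s (hεS hs) θ

lemma continuousOn_supportFn {S : Set ℝ} (hF : ContinuousOn (Function.uncurry F) (S ×ˢ univ)) :
    ContinuousOn (Function.uncurry fun t θ => supportFn (F t) θ) (S ×ˢ univ) := by
  have hA : ContinuousOn (Function.uncurry fun t θ => Real.cos θ * F t θ) (S ×ˢ univ) :=
    (by fun_prop : Continuous fun q : ℝ × ℝ => Real.cos q.2).continuousOn.mul hF
  have hB : ContinuousOn (Function.uncurry fun t θ => Real.sin θ * F t θ) (S ×ˢ univ) :=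
    (by fun_prop : Continuous fun q : ℝ × ℝ => Real.sin q.2).continuousOn.mul hF
  exact ((continuousOn_parametric_primitive hA).mul
    (by fun_prop : Continuous fun q : ℝ × ℝ => Real.sin q.2).continuousOn).sub
    ((continuousOn_parametric_primitive hB).mul
    (by fun_prop : Continuous fun q : ℝ × ℝ => Real.cos q.2).continuousOn)

lemma hasDerivAt_supportFn_param {S : Set ℝ} (hS : IsOpen S)
    (hF : ContinuousOn (Function.uncurry F) (S ×ˢ univ))
    (hF' : ContinuousOn (Function.uncurry F') (S ×ˢ univ))
    (hd : ∀ t ∈ S, ∀ θ, HasDerivAt (fun s => F s θ) (F' t θ) t) (θ : ℝ) {t : ℝ} (ht : t ∈ S) :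
    HasDerivAt (fun s => supportFn (F s) θ) (supportFn (F' t) θ) t := by
  have hcos : Continuous fun q : ℝ × ℝ => Real.cos q.2 := by fun_prop
  have hsin : Continuous fun q : ℝ × ℝ => Real.sin q.2 := by fun_prop
  have hA := hasDerivAt_parametric_integral (F := fun t θ => Real.cos θ * F t θ)
    (F' := fun t θ => Real.cos θ * F' t θ) hS (hcos.continuousOn.mul hF)
    (hcos.continuousOn.mul hF') (fun t ht θ => (hd t ht θ).const_mul _) θ ht
  have hB := hasDerivAt_parametric_integral (F := fun t θ => Real.sin θ * F t θ)
    (F' := fun t θ => Real.sin θ * F' t θ) hS (hsin.continuousOn.mul hF)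
    (hsin.continuousOn.mul hF') (fun t ht θ => (hd t ht θ).const_mul _) θ ht
  exact (hA.mul_const _).sub (hB.mul_const _)

end Parametric

/-! ### Evolution along the flow -/

/-- The velocity `-(∂²_θ ρ + ρ - 2 h)` of the radius of curvature `1 / ρ` along the flow. -/
noncomputable def radiusVel (ρ : ℝ → ℝ → ℝ) (t θ : ℝ) : ℝ :=
  -(iteratedDeriv 2 (ρ t) θ + (ρ t θ - 2 * hRatio (ρ t)))

section Flow

variable {T : ℝ} {ρ : ℝ → ℝ → ℝ}

lemma IsRCFSolution.contDiff_slice (hρ : IsRCFSolution T ρ) {t : ℝ} (ht : t ∈ Ico 0 T) :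
    ContDiff ℝ (⊤ : ℕ∞) (ρ t) := by
  rw [← contDiffOn_univ]
  exact hρ.1.comp (f := fun θ => (t, θ)) (by fun_prop) fun θ _ => ⟨ht, mem_univ _⟩

lemma IsRCFSolution.contDiffOn_radius (hρ : IsRCFSolution T ρ) :
    ContDiffOn ℝ (⊤ : ℕ∞) (Function.uncurry fun t θ => 1 / ρ t θ) (Ico 0 T ×ˢ univ) :=
  contDiffOn_const.div hρ.1 fun q hq => (hρ.2.1 q.1 hq.1 q.2).ne'

lemma IsRCFSolution.closedRadius (hρ : IsRCFSolution T ρ) {t : ℝ} (ht : t ∈ Ico 0 T) :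
    ClosedRadius fun θ => 1 / ρ t θ where
  cont := continuous_slice (F := fun t θ => 1 / ρ t θ) hρ.contDiffOn_radius.continuousOn ht
  cos_eq := by simpa only [mul_one_div] using hρ.2.2.2.1 t ht
  sin_eq := by simpa only [mul_one_div] using hρ.2.2.2.2.1 t ht

lemma IsRCFSolution.hasDerivAt_slice (hρ : IsRCFSolution T ρ) {t : ℝ} (ht : t ∈ Ico 0 T)
    (θ : ℝ) : HasDerivAt (ρ t) (deriv (ρ t) θ) θ :=
  ((hρ.contDiff_slice ht).differentiable (by simp) θ).hasDerivAt

lemma IsRCFSolution.hasDerivAt_deriv_slice (hρ : IsRCFSolution T ρ) {t : ℝ} (ht : t ∈ Ico 0 T)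
    (θ : ℝ) : HasDerivAt (deriv (ρ t)) (iteratedDeriv 2 (ρ t) θ) θ := by
  have h := (hρ.contDiff_slice ht).differentiable_iteratedDeriv 1
    (by exact_mod_cast ENat.natCast_lt_top 1) θ
  rw [iteratedDeriv_one] at h
  rw [iteratedDeriv_succ, iteratedDeriv_one]
  exact h.hasDerivAt

lemma IsRCFSolution.continuous_iteratedDeriv (hρ : IsRCFSolution T ρ) {t : ℝ}
    (ht : t ∈ Ico 0 T) : Continuous (iteratedDeriv 2 (ρ t)) :=
  (hρ.contDiff_slice ht).continuous_iteratedDeriv 2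
    (WithTop.coe_le_coe.2 (le_top (a := (2 : ℕ∞))))

lemma IsRCFSolution.hasDerivAt_radius (hρ : IsRCFSolution T ρ) {t : ℝ} (ht : t ∈ Ioo 0 T)
    (θ : ℝ) : HasDerivAt (fun s => 1 / ρ s θ) (radiusVel ρ t θ) t := by
  have ht' := Ioo_subset_Ico_self ht
  have h := (hρ.2.2.2.2.2 t ht' θ).hasDerivAt (Ico_mem_nhds ht.1 ht.2)
  have hne := (hρ.2.1 t ht' θ).ne'
  simp only [one_div]
  refine (h.inv hne).congr_deriv ?_
  simp only [radiusVel]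
  field_simp

/-- Joint continuity of the velocity: it is a component of the derivative of the jointly smooth
function `1 / ρ`. -/
lemma IsRCFSolution.continuousOn_radiusVel (hρ : IsRCFSolution T ρ) :
    ContinuousOn (Function.uncurry (radiusVel ρ)) (Ioo 0 T ×ˢ univ) := by
  have hopen : IsOpen (Ioo 0 T ×ˢ (univ : Set ℝ)) := isOpen_Ioo.prod isOpen_univ
  have hr := hρ.contDiffOn_radius.mono (prod_mono_left Ioo_subset_Ico_self)
  have h := (hr.continuousOn_fderiv_of_isOpen hopen (by simp)).clm_apply
    (continuousOn_const (c := ((1, 0) : ℝ × ℝ)))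
  refine h.congr fun q hq => ?_
  have h1 := ((hr.differentiableOn (by simp)).differentiableAt (hopen.mem_nhds hq)).hasFDerivAt
  have h2 : HasDerivAt (fun s => (s, q.2)) ((1, 0) : ℝ × ℝ) q.1 :=
    (hasDerivAt_id q.1).prodMk (hasDerivAt_const _ _)
  exact (hρ.hasDerivAt_radius hq.1 q.2).unique
    (HasFDerivAt.comp_hasDerivAt (l := Function.uncurry fun t θ => 1 / ρ t θ) q.1 h1 h2)

lemma IsRCFSolution.integral_radiusVel (hρ : IsRCFSolution T ρ) {t : ℝ} (ht : t ∈ Ico 0 T) :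
    ∫ θ in (0:ℝ)..(2 * π), radiusVel ρ t θ
      = -(∫ θ in (0:ℝ)..(2 * π), ρ t θ) + 4 * π * hRatio (ρ t) := by
  have hc := hρ.continuous_iteratedDeriv ht
  have hc0 := (hρ.contDiff_slice ht).continuous
  have hc1 : Continuous fun θ => ρ t θ - 2 * hRatio (ρ t) := hc0.sub continuous_const
  have h1 : ∫ θ in (0:ℝ)..(2 * π), iteratedDeriv 2 (ρ t) θ = 0 := by
    rw [intervalIntegral.integral_eq_sub_of_hasDerivAt
      (fun θ _ => hρ.hasDerivAt_deriv_slice ht θ) (hc.intervalIntegrable _ _)]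
    have h2 : (fun θ => ρ t (θ + 2 * π)) = ρ t := funext (hρ.2.2.1 t ht)
    have h3 := deriv_comp_add_const (f := ρ t) (2 * π) 0
    rw [h2, zero_add] at h3
    rw [h3, sub_self]
  simp only [radiusVel]
  rw [intervalIntegral.integral_neg, intervalIntegral.integral_add (hc.intervalIntegrable _ _)
    (hc1.intervalIntegrable _ _),
    intervalIntegral.integral_sub (hc0.intervalIntegrable _ _)
    (continuous_const.intervalIntegrable _ _), h1, intervalIntegral.integral_const, smul_eq_mul]
  ring

lemma IsRCFSolution.hasDerivAt_perim (hρ : IsRCFSolution T ρ) {t : ℝ} (ht : t ∈ Ioo 0 T) :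
    HasDerivAt (fun s => perim (ρ s))
      (-(∫ θ in (0:ℝ)..(2 * π), ρ t θ) + 4 * π * hRatio (ρ t)) t := by
  rw [← hρ.integral_radiusVel (Ioo_subset_Ico_self ht)]
  exact hasDerivAt_parametric_integral (F := fun t θ => 1 / ρ t θ) isOpen_Ioo
    (hρ.contDiffOn_radius.continuousOn.mono (prod_mono_left Ioo_subset_Ico_self))
    hρ.continuousOn_radiusVel (fun _ hs θ => hρ.hasDerivAt_radius hs θ) _ ht

/-- Both halves of the derivative of `½ ∫ p r` are equal by `green_supportFn` for the support
function of the velocity.  A second use of that identity, for `f = ρ - 2 h`, evaluates them. -/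
lemma IsRCFSolution.hasDerivAt_encArea (hρ : IsRCFSolution T ρ) {t : ℝ} (ht : t ∈ Ioo 0 T) :
    HasDerivAt (fun s => encArea (ρ s)) (-(2 * π) + 2 * hRatio (ρ t) * perim (ρ t)) t := by
  have ht' := Ioo_subset_Ico_self ht
  have hr := hρ.closedRadius ht'
  have hrc := hr.cont
  have hF : ContinuousOn (Function.uncurry fun t θ => 1 / ρ t θ) (Ioo 0 T ×ˢ univ) :=
    hρ.contDiffOn_radius.continuousOn.mono (prod_mono_left Ioo_subset_Ico_self)
  have hF' := hρ.continuousOn_radiusVel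
  have hd : ∀ s ∈ Ioo 0 T, ∀ θ, HasDerivAt (fun s => 1 / ρ s θ) (radiusVel ρ s θ) s :=
    fun s hs θ => hρ.hasDerivAt_radius hs θ
  have hv : Continuous (radiusVel ρ t) := continuous_slice hF' ht
  have hder := (hasDerivAt_parametric_integral
    (F := fun t θ => supportFn (fun θ => 1 / ρ t θ) θ * (1 / ρ t θ))
    (F' := fun t θ => supportFn (radiusVel ρ t) θ * (1 / ρ t θ)
      + supportFn (fun θ => 1 / ρ t θ) θ * radiusVel ρ t θ)
    isOpen_Ioo ((continuousOn_supportFn hF).mul hF)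
    (((continuousOn_supportFn hF').mul hF).add ((continuousOn_supportFn hF).mul hF'))
    (fun s hs θ => (hasDerivAt_supportFn_param isOpen_Ioo hF hF' hd θ hs).mul (hd s hs θ))
    (2 * π) ht).const_mul (1 / 2)
  simp only [encArea_eq]
  refine hder.congr_deriv ?_
  have hp := continuous_supportFn hrc
  have hpv := continuous_supportFn hv
  have hsymm := green_supportFn hr (hasDerivAt_supportFn hv) (hasDerivAt_supportFnDeriv hv)
    (hv.sub hpv)
  simp only [sub_add_cancel] at hsymm
  have heval := green_supportFn hr (f := fun θ => ρ t θ - 2 * hRatio (ρ t))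
    (fun θ => (hρ.hasDerivAt_slice ht' θ).sub_const _) (hρ.hasDerivAt_deriv_slice ht')
    (hρ.continuous_iteratedDeriv ht')
  have hL : ∫ θ in (0:ℝ)..(2 * π), (iteratedDeriv 2 (ρ t) θ + (ρ t θ - 2 * hRatio (ρ t)))
      * supportFn (fun θ => 1 / ρ t θ) θ
      = -∫ θ in (0:ℝ)..(2 * π), radiusVel ρ t θ * supportFn (fun θ => 1 / ρ t θ) θ := by
    rw [← intervalIntegral.integral_neg]
    congr 1 with θ
    simp only [radiusVel]
    ring
  have hR : ∫ θ in (0:ℝ)..(2 * π), (ρ t θ - 2 * hRatio (ρ t)) * (1 / ρ t θ)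
      = 2 * π - 2 * hRatio (ρ t) * perim (ρ t) := by
    have h1 : ∀ θ, (ρ t θ - 2 * hRatio (ρ t)) * (1 / ρ t θ)
        = 1 - 2 * hRatio (ρ t) * (1 / ρ t θ) := by
      intro θ
      have := (hρ.2.1 t ht' θ).ne'
      field_simp
    have hc1 : Continuous fun θ => 2 * hRatio (ρ t) * (1 / ρ t θ) := continuous_const.mul hrc
    simp only [h1]
    rw [intervalIntegral.integral_sub (continuous_const.intervalIntegrable _ _)
      (hc1.intervalIntegrable _ _), intervalIntegral.integral_const_mul,
      intervalIntegral.integral_const, perim]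
    simp
  rw [hL, hR] at heval
  have hc2 : Continuous fun θ => supportFn (radiusVel ρ t) θ * (1 / ρ t θ) := hpv.mul hrc
  have hc3 : Continuous fun θ => supportFn (fun θ => 1 / ρ t θ) θ * radiusVel ρ t θ := hp.mul hv
  rw [intervalIntegral.integral_add (hc2.intervalIntegrable _ _)
    (hc3.intervalIntegrable _ _), ← hsymm]
  simp only [mul_comm (supportFn (fun θ => 1 / ρ t θ) _)]
  linarith

lemma IsRCFSolution.continuousOn_perim (hρ : IsRCFSolution T ρ) :
    ContinuousOn (fun t => perim (ρ t)) (Ico 0 T) :=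
  continuousOn_parametric_integral (F := fun t θ => 1 / ρ t θ)
    hρ.contDiffOn_radius.continuousOn _

lemma IsRCFSolution.continuousOn_encArea (hρ : IsRCFSolution T ρ) :
    ContinuousOn (fun t => encArea (ρ t)) (Ico 0 T) := by
  have hF := hρ.contDiffOn_radius.continuousOn
  simp only [encArea_eq]
  exact continuousOn_const.mul (continuousOn_parametric_integral
    (F := fun t θ => supportFn (fun θ => 1 / ρ t θ) θ * (1 / ρ t θ))
    ((continuousOn_supportFn hF).mul hF) _)

end Flow

/-- Along the renormalized curvature flow (with strictly convex
curves), the isoperimetric ratio `σ_t²/(4π λ_t)` is non-increasing on `[0,T)`. -/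
theorem stmt4 (T : ℝ) (ρ : ℝ → ℝ → ℝ) (hρ : IsRCFSolution T ρ) :
    AntitoneOn (fun t => (perim (ρ t)) ^ 2 / (4 * π * encArea (ρ t))) (Ico 0 T) := by
  have hlam : ∀ t ∈ Ico 0 T, 0 < encArea (ρ t) := fun t ht =>
    encArea_pos (hρ.closedRadius ht) (hρ.2.1 t ht)
  have hder : ∀ t ∈ Ioo 0 T, HasDerivAt (fun t => (perim (ρ t)) ^ 2 / (4 * π * encArea (ρ t))) _ t :=
    fun t ht => ((hρ.hasDerivAt_perim ht).fun_pow 2).fun_div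
      ((hρ.hasDerivAt_encArea ht).const_mul (4 * π))
      (mul_pos (by positivity) (hlam t (Ioo_subset_Ico_self ht))).ne'
  refine antitoneOn_of_deriv_nonpos (convex_Ico 0 T) ?_ ?_ ?_
  · exact (hρ.continuousOn_perim.pow 2).div (continuousOn_const.mul hρ.continuousOn_encArea)
      fun t ht => (mul_pos (by positivity) (hlam t ht)).ne'
  · rw [interior_Ico]
    exact fun t ht => (hder t ht).differentiableAt.differentiableWithinAt
  · rw [interior_Ico]
    intro t ht
    have ht' := Ioo_subset_Ico_self ht
    have hr := hρ.closedRadius ht'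
    rw [(hder t ht).deriv]
    refine div_nonpos_of_nonpos_of_nonneg ?_ (sq_nonneg _)
    have hl := hlam t ht'
    have hs := perim_pos hr.cont (hρ.2.1 t ht')
    have hiso := isoperimetric_encArea hr
    have hcs := four_pi_sq_le (hρ.contDiff_slice ht').continuous (hρ.2.1 t ht')
    have hh : hRatio (ρ t) * encArea (ρ t) = perim (ρ t) := div_mul_cancel₀ _ hl.ne'
    generalize hRatio (ρ t) = h at *
    generalize encArea (ρ t) = l at *
    generalize perim (ρ t) = s at *
    generalize (∫ θ in (0:ℝ)..(2 * π), ρ t θ) = R at *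
    have hpi := Real.pi_pos
    -- `l` times the numerator of the derivative, with `h l = s` substituted.
    have key : l * ((2:ℕ) * s ^ (2 - 1) * (-R + 4 * π * h) * (4 * π * l)
        - s ^ 2 * (4 * π * (-(2 * π) + 2 * h * s)))
        = 4 * π * (-2 * l ^ 2 * (s * R) + 10 * π * s ^ 2 * l - 2 * s ^ 4) := by
      push_cast
      linear_combination (32 * π ^ 2 * s * l - 8 * π * s ^ 3) * hh
    have h1 : l ^ 2 * (4 * π ^ 2) ≤ l ^ 2 * (s * R) := mul_le_mul_of_nonneg_left hcs (sq_nonneg l)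
    have h2 : 0 ≤ (s ^ 2 - 4 * π * l) * (s ^ 2 - π * l) :=
      mul_nonneg (by linarith) (by nlinarith [mul_pos hpi hl])
    have h3 : -2 * l ^ 2 * (s * R) + 10 * π * s ^ 2 * l - 2 * s ^ 4 ≤ 0 := by
      nlinarith
    refine nonpos_of_mul_nonpos_right (a := l) ?_ hl
    refine le_of_eq_of_le key (mul_nonpos_of_nonneg_of_nonpos (by positivity) h3)
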